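/- arXiv:1710.05378 — 2 statements merged into one kernel-verified Lean document; each statement's English description precedes it below -/
import Mathlib

section
/- (Wielandt) Let G be a finite group having three soluble subgroups A₁, A₂, A₃ whose indices |G : A₁|, |G : A₂|, |G : A₃| are pairwise coprime. Then G is itself soluble. -/
/-!
The proof is by induction on the order of `G`; it suffices to find a nontrivial soluble normal
subgroup `N`, because the images of the `Aᵢ` in `G ⧸ N` satisfy the same hypotheses.

If `A₁` is trivial, its index is `|G|`, so `A₂`, whose index is coprime to `|G|`, is all of `G`.
Otherwise the nontrivial soluble group `A₁` has a nontrivial normal `p`-subgroup `P` for some prime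
`p` (`exists_normal_pGroup_of_isSolvable`), and `p` fails to divide the index of one of `A₂`, `A₃`;
call that subgroup `B`. Coprimality of the indices gives `G = A₁B` (`exists_mul_eq_of_coprime`).
As `p` does not divide `|G : B|`, the `p`-group `P` fixes a coset `gB`, i.e. `P` lies in `gBg⁻¹`, and
`g` may be taken in `A₁`, which normalizes `P`; hence `P ≤ B`. Every conjugate of `P` in `G = BA₁` is
then a conjugate by an element of `B`, so the normal closure of `P` lies in `B` and is soluble
(`normalClosure_le_of_pGroup`).
-/

/-- Subgroups of coprime index factorize the group: `A` acts transitively on `G ⧸ B`, since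
`|G : B|` divides the length `|A : A ∩ B|` of the orbit of the trivial coset. -/
theorem exists_mul_eq_of_coprime {G : Type*} [Group G] [Finite G] {A B : Subgroup G}
    (h : Nat.Coprime A.index B.index) (g : G) : ∃ a ∈ A, ∃ b ∈ B, a * b = g := by
  have hstab : MulAction.stabilizer A ((1 : G) : G ⧸ B) = B.subgroupOf A := by
    ext a
    rw [MulAction.mem_stabilizer_iff, Subgroup.mem_subgroupOf]
    change (((a : G) * 1 : G) : G ⧸ B) = ((1 : G) : G ⧸ B) ↔ _
    rw [mul_one, eq_comm, QuotientGroup.eq]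
    simp
  have hmul : B.relIndex A * A.index = A.relIndex B * B.index := by
    rw [← Subgroup.inf_relIndex_right B A, ← Subgroup.inf_relIndex_right A B,
      Subgroup.relIndex_mul_index inf_le_right, Subgroup.relIndex_mul_index inf_le_right, inf_comm]
  have hdvd : B.index ∣ B.relIndex A :=
    h.symm.dvd_of_dvd_mul_right (hmul ▸ Dvd.intro_left _ rfl)
  have horb : (MulAction.orbit A ((1 : G) : G ⧸ B)) = Set.univ := by
    apply Set.eq_of_subset_of_ncard_le (Set.subset_univ _) _ (Set.toFinite _)
    rw [Set.ncard_univ, ← MulAction.index_stabilizer, hstab]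
    exact Nat.le_of_dvd (Nat.pos_of_ne_zero Subgroup.index_ne_zero_of_finite) hdvd
  obtain ⟨a, ha⟩ : (g : G ⧸ B) ∈ MulAction.orbit A ((1 : G) : G ⧸ B) := horb ▸ Set.mem_univ _
  change (((a : G) * 1 : G) : G ⧸ B) = (g : G ⧸ B) at ha
  rw [mul_one, QuotientGroup.eq] at ha
  exact ⟨a, a.2, _, ha, by simp⟩

/-- The last nontrivial term of the derived series is abelian and characteristic, so each of its
Sylow subgroups is normal in the whole group. -/
theorem exists_normal_pGroup_of_isSolvable (H : Type*) [Group H] [Finite H] [Nontrivial H]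
    (hs : Group.IsSolvable H) :
    ∃ (p : ℕ) (P : Subgroup H), p.Prime ∧ P.Normal ∧ IsPGroup p P ∧ P ≠ ⊥ := by
  classical
  have hex : ∃ n, derivedSeries H n = ⊥ := hs.solvable
  obtain ⟨k, hk⟩ : ∃ k, Nat.find hex = k + 1 := by
    refine Nat.exists_eq_succ_of_ne_zero fun h0 => ?_
    have := Nat.find_spec hex
    rw [h0, derivedSeries_zero] at this
    exact top_ne_bot this
  have hne : derivedSeries H k ≠ ⊥ := Nat.find_min hex (by omega)
  have hcomm : ⁅derivedSeries H k, derivedSeries H k⁆ = ⊥ := by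
    rw [← derivedSeries_succ, ← hk]
    exact Nat.find_spec hex
  generalize hD : derivedSeries H k = D at hne hcomm
  have hDn : D.Normal := hD ▸ derivedSeries_normal H k
  have hab : ∀ x y : D, x * y = y * x := by
    rw [Subgroup.commutator_eq_bot_iff_le_centralizer] at hcomm
    intro x y
    exact Subtype.ext (Subgroup.mem_centralizer_iff.mp (hcomm y.2) x x.2)
  have hcard : Nat.card D ≠ 1 := fun h => hne (Subgroup.card_eq_one.mp h)
  obtain ⟨p, hp, hpd⟩ := Nat.exists_prime_and_dvd hcard
  have : Fact p.Prime := ⟨hp⟩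
  obtain ⟨S⟩ : Nonempty (Sylow p D) := inferInstance
  have hSn : (S : Subgroup D).Normal :=
    ⟨fun n hn g => by rwa [hab g n, mul_inv_cancel_right]⟩
  have := S.characteristic_of_normal hSn
  refine ⟨p, (S : Subgroup D).map D.subtype, hp, inferInstance, S.2.map _, fun hbot => ?_⟩
  rw [Subgroup.map_eq_bot_iff_of_injective _ D.subtype_injective] at hbot
  exact S.ne_bot_of_dvd_card hpd hbot

/-- If `A` and `B` have coprime indices, so that `G = AB`, and `p` does not divide `|G : B|`, then
every `p`-subgroup normalized by `A` has all its `G`-conjugates in `B`. -/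
theorem normalClosure_le_of_pGroup {G : Type*} [Group G] [Finite G] {A B P : Subgroup G} {p : ℕ}
    (hp : p.Prime) (hP : IsPGroup p P) (hnorm : ∀ a ∈ A, ∀ x ∈ P, a * x * a⁻¹ ∈ P)
    (hc : Nat.Coprime A.index B.index) (hpB : ¬ p ∣ B.index) :
    Subgroup.normalClosure (P : Set G) ≤ B := by
  have : Fact p.Prime := ⟨hp⟩
  have hPB : ∀ x ∈ P, x ∈ B := by
    intro x hx
    obtain ⟨q, hq⟩ := hP.nonempty_fixed_point_of_prime_not_dvd_card (G ⧸ B) hpB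
    obtain ⟨g, rfl⟩ := QuotientGroup.mk_surjective q
    obtain ⟨a, ha, b, hb, rfl⟩ := exists_mul_eq_of_coprime hc g
    -- The fixed coset is `aB`, so the conjugate `a * x * a⁻¹`, again in `P`, lies in `a * B * a⁻¹`.
    have h := hq ⟨_, hnorm a ha x hx⟩
    change ((a * x * a⁻¹ * (a * b) : G) : G ⧸ B) = ((a * b : G) : G ⧸ B) at h
    rw [eq_comm, QuotientGroup.eq] at h
    have h' : b⁻¹ * x * b ∈ B := by
      convert h using 1
      group
    simpa [mul_assoc] using B.mul_mem (B.mul_mem hb h') (B.inv_mem hb)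
  refine (Subgroup.closure_le B).mpr fun y hy => ?_
  obtain ⟨x, hx, hxy⟩ := Group.mem_conjugatesOfSet_iff.mp hy
  obtain ⟨g, rfl⟩ := isConj_iff.mp hxy
  obtain ⟨b, hb, a, ha, rfl⟩ := exists_mul_eq_of_coprime hc.symm g
  have h := B.mul_mem (B.mul_mem hb (hPB _ (hnorm a ha x hx))) (B.inv_mem hb)
  simpa [mul_assoc] using h

/-- Wielandt: If `G` has three soluble subgroups of pairwise
coprime indices, then `G` is soluble. -/
theorem isSolvable_of_three_solvable_subgroups_coprime_indices
    (G : Type*) [Group G] [Finite G] (A₁ A₂ A₃ : Subgroup G)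
    (hs₁ : IsSolvable ↥A₁) (hs₂ : IsSolvable ↥A₂) (hs₃ : IsSolvable ↥A₃)
    (hc12 : Nat.Coprime A₁.index A₂.index)
    (hc13 : Nat.Coprime A₁.index A₃.index)
    (hc23 : Nat.Coprime A₂.index A₃.index) :
    IsSolvable G := by
  -- The root-level `IsSolvable` is a deprecated alias, which instance search does not unfold.
  change Group.IsSolvable A₁ at hs₁
  change Group.IsSolvable A₂ at hs₂
  change Group.IsSolvable A₃ at hs₃
  change Group.IsSolvable G
  obtain ⟨n, hn⟩ : ∃ n, n = Nat.card G := ⟨_, rfl⟩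
  induction n using Nat.strong_induction_on generalizing G with
  | _ n ih =>
    by_cases hA : A₁ = ⊥
    · subst hA
      rw [Subgroup.index_bot] at hc12
      have h2 : A₂ = ⊤ := Subgroup.index_eq_one.mp
        (Nat.eq_one_of_dvd_coprimes hc12 A₂.index_dvd_card dvd_rfl)
      subst h2
      exact Group.isSolvable_of_surjective (f := (⊤ : Subgroup G).subtype)
        fun x => ⟨⟨x, trivial⟩, rfl⟩
    have : Nontrivial A₁ := A₁.nontrivial_iff_ne_bot.mpr hA
    obtain ⟨p, Q, hp, hQn, hQ, hQne⟩ := exists_normal_pGroup_of_isSolvable A₁ hs₁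
    set P : Subgroup G := Q.map A₁.subtype with hPdef
    have hP : IsPGroup p P := hQ.map _
    have hPne : P ≠ ⊥ := fun h =>
      hQne ((Subgroup.map_eq_bot_iff_of_injective _ A₁.subtype_injective).mp h)
    have hnorm : ∀ a ∈ A₁, ∀ x ∈ P, a * x * a⁻¹ ∈ P := by
      rintro a ha _ ⟨x, hx, rfl⟩
      exact ⟨_, hQn.conj_mem x hx ⟨a, ha⟩, rfl⟩
    set N : Subgroup G := Subgroup.normalClosure (P : Set G) with hN
    have hPN : P ≤ N := Subgroup.subset_normalClosure
    have hNs : Group.IsSolvable N := by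
      by_cases h2 : p ∣ A₂.index
      · have h3 : ¬ p ∣ A₃.index := fun h3 =>
          hp.one_lt.ne' (Nat.eq_one_of_dvd_coprimes hc23 h2 h3)
        exact Group.isSolvable_of_isSolvable_injective (Subgroup.inclusion_injective
          (normalClosure_le_of_pGroup hp hP hnorm hc13 h3))
      · exact Group.isSolvable_of_isSolvable_injective (Subgroup.inclusion_injective
          (normalClosure_le_of_pGroup hp hP hnorm hc12 h2))
    have hNne : N ≠ ⊥ := fun h => hPne (le_bot_iff.mp (h ▸ hPN))
    have hlt : Nat.card (G ⧸ N) < n := by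
      have h1 : 1 < Nat.card N := N.one_lt_card_iff_ne_bot.mpr hNne
      have h0 : 0 < Nat.card (G ⧸ N) := Nat.card_pos
      rw [hn, N.card_eq_card_quotient_mul_card_subgroup]
      exact lt_mul_of_one_lt_right h0 h1
    have hsurj := QuotientGroup.mk'_surjective N
    have hmap : ∀ A : Subgroup G, Group.IsSolvable A →
        Group.IsSolvable (A.map (QuotientGroup.mk' N)) :=
      fun A _ => Group.isSolvable_of_surjective ((QuotientGroup.mk' N).subgroupMap_surjective A)
    have hcop : ∀ A B : Subgroup G, Nat.Coprime A.index B.index →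
        Nat.Coprime (A.map (QuotientGroup.mk' N)).index (B.map (QuotientGroup.mk' N)).index :=
      fun A B h => (h.coprime_dvd_left (A.index_map_dvd hsurj)).coprime_dvd_right
        (B.index_map_dvd hsurj)
    exact (Group.isSolvable_iff_subgroup_quotient N).mpr ⟨hNs, ih _ hlt (G ⧸ N) _ _ _
      (hcop _ _ hc12) (hcop _ _ hc13) (hcop _ _ hc23) (hmap A₁ hs₁) (hmap A₂ hs₂) (hmap A₃ hs₃)
      rfl⟩
end

section
/- (Isaacs) Let p be a prime and H a p-subgroup of a finite group G such that HQ = QH (as subsets of G) for every Sylow q-subgroup Q of G and every prime q ≠ p. Then the normal closure H^G of H in G is soluble. -/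
/-!
The case `G = H Q` with `Q` a Sylow `q`-subgroup already contains Burnside's `p^a q^b` theorem, so
this is proved first, from the Wedderburn decomposition of `ℂ[G]`. Its core is
`mem_center_of_card_class_eq_prime_pow`: in a finite simple group, an element whose conjugacy class
has prime power size is central. This follows from the integrality of class sums
(`exists_isIntegral_class_sum`), from column orthogonality (`sum_trace_eq_zero`), and from the fact
that roots of unity whose average is a nonzero algebraic integer are all equal
(`all_eq_of_isIntegral_average`).

For the theorem itself, let `G` be a counterexample of minimal order. By induction, applied to the
normal closure of `H` and to quotients, `G` is the normal closure of `H`, every proper quotient of `G`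
is soluble, and `G` has no nontrivial soluble normal subgroup. Since `G` is not a `p`-group, it has
a nontrivial Sylow `q`-subgroup `Q` with `q ≠ p`. By Burnside `H Q ≠ G`, so Kegel's lemma
(`normalClosure_ne_top_of_permutes`) puts `Q` into a proper normal subgroup, and therefore
`M = [G, G] ≠ G`. As `H M` is normal, `H M = G`; so `G ⧸ M` is a `p`-group and `M` contains every
Sylow `r`-subgroup with `r ≠ p`. Hence the hypothesis passes to `H ∩ M` in `M`, and by induction
`H ∩ M` lies in the soluble radical of `M`, which is trivial. Now `H ∩ M = 1`, `Q ≤ M` and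
`H Q = Q H` force `H` to normalise `Q`, and likewise each of its conjugates. So all conjugates of `H`
normalise `Q`, that is, `Q` is normal in `G`: a contradiction.
-/

open Subgroup
open scoped Pointwise

namespace IsaacsSemipermutable

/-! ### Averages of roots of unity -/

theorem norm_sum_le_card (s : Multiset ℂ) (hs : ∀ z ∈ s, ‖z‖ = 1) : ‖s.sum‖ ≤ s.card := by
  refine (norm_multiset_sum_le s).trans ?_
  rw [Multiset.map_congr rfl hs]
  simp

/-- The equality case of the triangle inequality for complex numbers of modulus one. -/
theorem eq_of_norm_sum_eq (s : Multiset ℂ) (hs : ∀ z ∈ s, ‖z‖ = 1) (h : ‖s.sum‖ = s.card)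
    {z w : ℂ} (hz : z ∈ s) (hw : w ∈ s) : z = w := by
  by_contra hne
  obtain ⟨t, rfl⟩ := Multiset.exists_cons_of_mem hz
  obtain ⟨t, rfl⟩ := Multiset.exists_cons_of_mem
    ((Multiset.mem_cons.1 hw).resolve_left (Ne.symm hne))
  have h1 := hs z (by simp)
  have h2 := hs w (by simp)
  have h3 := norm_sum_le_card t fun x hx => hs x (by simp [hx])
  refine hne (eq_of_norm_eq_of_norm_add_eq (h1.trans h2.symm) (le_antisymm (norm_add_le _ _) ?_))
  simp only [Multiset.sum_cons, Multiset.card_cons] at h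
  have h4 := norm_add_le (z + w) t.sum
  rw [add_assoc, h] at h4
  push_cast at h4
  linarith

/-- If the average of finitely many roots of unity is a nonzero algebraic integer, then they all
coincide: every conjugate of the average has modulus at most one, so by Kronecker's theorem the
average is itself a root of unity, and the triangle inequality is an equality. -/
theorem all_eq_of_isIntegral_average (s : Multiset ℂ) (m : ℕ) (hm : 0 < m) (hs : ∀ z ∈ s, z ^ m = 1)
    (hint : IsIntegral ℤ (s.sum / (s.card : ℂ))) (h0 : s.sum ≠ 0) :
    ∃ l : ℂ, ∀ z ∈ s, z = l := by
  classical
  have hc0 : s.card ≠ 0 := by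
    intro h
    rw [Multiset.card_eq_zero] at h
    exact h0 (by simp [h])
  obtain ⟨K, hKf, hmem⟩ : ∃ K : IntermediateField ℚ ℂ, FiniteDimensional ℚ K ∧ ∀ z ∈ s, z ∈ K := by
    refine ⟨IntermediateField.adjoin ℚ (s.toFinset : Set ℂ), ?_, fun z hz =>
      IntermediateField.subset_adjoin _ _ (by simpa using hz)⟩
    refine IntermediateField.finiteDimensional_adjoin fun z hz => ?_
    have hz' : z ∈ s := by simpa using hz
    exact ⟨Polynomial.X ^ m - 1, Polynomial.monic_X_pow_sub_C (1 : ℚ) hm.ne', by simp [hs z hz']⟩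
  have : NumberField K := { }
  have norm1 : ∀ z : ℂ, z ^ m = 1 → ‖z‖ = 1 := fun z hz => Complex.norm_eq_one_of_pow_eq_one hz hm.ne'
  lift s to Multiset K using hmem
  have hcard : ∀ φ : K →+* ℂ, φ (s.sum / (s.card : K)) = (s.map φ).sum / ((s.map φ).card : ℂ) := by
    intro φ
    simp [map_div₀, map_multiset_sum]
  have hs' : ∀ z ∈ s, z ^ m = 1 := fun z hz => by
    have := hs z (Multiset.mem_map_of_mem _ hz)
    exact_mod_cast this
  have hval : ((s.sum / (s.card : K) : K) : ℂ) =
      (s.map (fun z : K => (z : ℂ))).sum / ((s.map (fun z : K => (z : ℂ))).card : ℂ) :=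
    hcard (algebraMap K ℂ)
  rw [← hval] at hint
  have hint' : IsIntegral ℤ (s.sum / (s.card : K) : K) :=
    (isIntegral_algebraMap_iff (algebraMap K ℂ).injective).1 hint
  have hne : s.sum / (s.card : K) ≠ 0 := by
    intro h
    rw [h] at hval
    have := hval.symm
    simp only [ZeroMemClass.coe_zero, div_eq_zero_iff, Nat.cast_eq_zero] at this
    exact this.elim h0 hc0
  have hle : ∀ φ : K →+* ℂ, ‖φ (s.sum / (s.card : K))‖ ≤ 1 := by
    intro φ
    rw [hcard, norm_div, Complex.norm_natCast]
    refine div_le_one_of_le₀ (norm_sum_le_card _ fun z hz => norm1 z ?_) (by positivity)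
    obtain ⟨y, hy, rfl⟩ := Multiset.mem_map.1 hz
    rw [← map_pow, hs' y hy, map_one]
  obtain ⟨k, hk, hpow⟩ := NumberField.Embeddings.pow_eq_one_of_norm_le_one K ℂ hne hint' hle
  have h1 : ‖((s.sum / (s.card : K) : K) : ℂ)‖ = 1 := by
    refine Complex.norm_eq_one_of_pow_eq_one (n := k) ?_ hk.ne'
    exact_mod_cast hpow
  rw [hval, norm_div, Complex.norm_natCast, div_eq_one_iff_eq (by exact_mod_cast hc0)] at h1
  obtain ⟨l, hl⟩ := Multiset.exists_mem_of_ne_zero (s := s.map (fun z : K => (z : ℂ))) (by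
    intro h; apply hc0; simp [h])
  exact ⟨l, fun z hz => eq_of_norm_sum_eq _ (fun z hz => norm1 z (hs z hz)) h1 hz hl⟩

theorem pow_eq_one_of_mem_roots_charpoly {n m : ℕ} (M : Matrix (Fin n) (Fin n) ℂ) (h : M ^ m = 1) :
    ∀ z ∈ M.charpoly.roots, z ^ m = 1 := by
  intro z hz
  have h1 := Matrix.mem_spectrum_iff_isRoot_charpoly.2 (Polynomial.isRoot_of_mem_roots hz)
  have h2 := spectrum.pow_mem_pow M m h1
  rw [h] at h2
  have : Nontrivial (Matrix (Fin n) (Fin n) ℂ) := by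
    by_contra hn
    rw [not_nontrivial_iff_subsingleton] at hn
    simp at h2
  simpa using h2

theorem isIntegral_trace_of_pow_eq_one {n m : ℕ} (hm : 0 < m) (M : Matrix (Fin n) (Fin n) ℂ) (h : M ^ m = 1) :
    IsIntegral ℤ M.trace := by
  rw [Matrix.trace_eq_sum_roots_charpoly]
  refine IsIntegral.multiset_sum fun z hz => ?_
  exact IsIntegral.of_pow hm (by rw [pow_eq_one_of_mem_roots_charpoly M h z hz]; exact isIntegral_one)

/-- A complex matrix of finite order whose normalised trace is a nonzero algebraic integer is
scalar: all its eigenvalues agree, and it is diagonalisable because its minimal polynomial divides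
the separable polynomial `X ^ m - 1`. -/
theorem exists_eq_scalar_of_isIntegral {n m : ℕ} (hm : 0 < m) (M : Matrix (Fin n) (Fin n) ℂ) (h : M ^ m = 1)
    (hint : IsIntegral ℤ (M.trace / n)) (h0 : M.trace ≠ 0) : ∃ l : ℂ, M = algebraMap ℂ _ l := by
  have hc : M.charpoly.roots.card = n := by
    rw [IsAlgClosed.card_roots_eq_natDegree, Matrix.charpoly_natDegree_eq_dim, Fintype.card_fin]
  rw [Matrix.trace_eq_sum_roots_charpoly] at hint h0
  obtain ⟨l, hl⟩ := all_eq_of_isIntegral_average M.charpoly.roots m hm (pow_eq_one_of_mem_roots_charpoly M h) (by rwa [hc]) h0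
  refine ⟨l, ?_⟩
  have hdvd : minpoly ℂ M ∣ Polynomial.X - Polynomial.C l := by
    have hsq : Squarefree (minpoly ℂ M) := by
      refine Squarefree.squarefree_of_dvd (minpoly.dvd ℂ M (p := Polynomial.X ^ m - 1) (by simp [h])) ?_
      exact (Polynomial.X_pow_sub_one_separable_iff.2 (by exact_mod_cast hm.ne')).squarefree
    have hint := Algebra.IsIntegral.isIntegral (R := ℂ) M
    rw [(IsAlgClosed.splits (minpoly ℂ M)).dvd_iff_roots_le_roots (minpoly.ne_zero hint) (Polynomial.X_sub_C_ne_zero l)]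
    rw [Multiset.le_iff_subset]
    · intro z hz
      simp only [Polynomial.roots_X_sub_C, Multiset.mem_singleton]
      exact hl z (Multiset.subset_of_le (Polynomial.roots.le_of_dvd M.charpoly_monic.ne_zero M.minpoly_dvd_charpoly) hz)
    · exact Polynomial.nodup_roots (PerfectField.separable_iff_squarefree.2 hsq)
  have := Polynomial.aeval_eq_zero_of_dvd_aeval_eq_zero hdvd (minpoly.aeval ℂ M)
  simpa [sub_eq_zero] using this

/-! ### Burnside's theorem -/

section Burnside

open MonoidAlgebra

/-- The class sum of `g` is central in the group algebra, so it acts in an irreducible matrix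
representation as a scalar `ω`; since it is integral over `ℤ` already in `ℤ[G]`, so is `ω`. Comparing
traces gives `|g^G| χ(g) = χ(1) ω`. -/
theorem exists_isIntegral_class_sum {G : Type*} [Group G] [Finite G] {n : ℕ}
    (f : MonoidAlgebra ℂ G →ₐ[ℂ] Matrix (Fin n) (Fin n) ℂ) (hf : Function.Surjective f) (g : G) :
    ∃ ω : ℂ, IsIntegral ℤ ω ∧
      (Nat.card {y : G // IsConj g y} : ℂ) * (f (of ℂ G g)).trace = n * ω := by
  classical
  have := Fintype.ofFinite G
  rcases Nat.eq_zero_or_pos n with rfl | hn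
  · exact ⟨0, isIntegral_zero, by simp [Matrix.trace]⟩
  have : Nonempty (Fin n) := ⟨⟨0, hn⟩⟩
  set S : Finset G := Finset.univ.filter fun y => IsConj g y with hS
  set c : MonoidAlgebra ℂ G := ∑ y ∈ S, of ℂ G y with hc
  have hcomm : ∀ x : G, of ℂ G x * c = c * of ℂ G x := by
    intro x
    rw [hc, Finset.mul_sum, Finset.sum_mul]
    simp only [← map_mul]
    refine Finset.sum_bij' (fun y _ => x * y * x⁻¹) (fun y _ => x⁻¹ * y * x) ?_ ?_ ?_ ?_ ?_
    · intro y hy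
      simp only [hS, Finset.mem_filter, Finset.mem_univ, true_and] at hy ⊢
      exact hy.trans (isConj_iff.2 ⟨x, rfl⟩)
    · intro y hy
      simp only [hS, Finset.mem_filter, Finset.mem_univ, true_and] at hy ⊢
      exact hy.trans (isConj_iff.2 ⟨x⁻¹, by simp⟩)
    · intros; group
    · intros; group
    · intros; congr 1; group
  have hcomm' : ∀ a, a * c = c * a := by
    intro a
    induction a using MonoidAlgebra.induction_on with
    | of x => exact hcomm x
    | add a b ha hb => rw [add_mul, mul_add, ha, hb]
    | smul r a ha => rw [smul_mul_assoc, mul_smul_comm, ha]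
  have hcen : f c ∈ Set.center (Matrix (Fin n) (Fin n) ℂ) := by
    rw [Semigroup.mem_center_iff]
    intro M
    obtain ⟨a, rfl⟩ := hf M
    rw [← map_mul, ← map_mul, hcomm' a]
  rw [Matrix.center_eq_range] at hcen
  obtain ⟨ω, hω⟩ := hcen
  refine ⟨ω, ?_, ?_⟩
  · have h1 : IsIntegral ℤ (∑ y ∈ S, of ℤ G y) := Algebra.IsIntegral.isIntegral _
    have h2 := h1.map ((MonoidAlgebra.mapRingHom G (Int.castRingHom ℂ)).toIntAlgHom)
    have h3 : (MonoidAlgebra.mapRingHom G (Int.castRingHom ℂ)).toIntAlgHom (∑ y ∈ S, of ℤ G y) = c := by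
      simp [hc]
    rw [h3] at h2
    have h4 := h2.map ((f : MonoidAlgebra ℂ G →+* Matrix (Fin n) (Fin n) ℂ).toIntAlgHom)
    have h5 : (f : MonoidAlgebra ℂ G →+* Matrix (Fin n) (Fin n) ℂ).toIntAlgHom c = Matrix.scalar _ ω := hω.symm
    rw [h5] at h4
    exact (isIntegral_algHom_iff ((Matrix.scalar (Fin n) : ℂ →+* _).toIntAlgHom)
      (fun a b h => Matrix.scalar_inj.1 h)).1 h4
  · have h1 : (f c).trace = n * ω := by rw [← hω]; simp [Matrix.trace]
    rw [← h1, hc, map_sum, Matrix.trace_sum, Finset.sum_congr rfl (g := fun _ => (f (of ℂ G g)).trace)]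
    · rw [Finset.sum_const, nsmul_eq_mul]
      congr 2
      rw [Nat.card_eq_fintype_card, Fintype.card_subtype]
    · intro y hy
      simp only [hS, Finset.mem_filter, Finset.mem_univ, true_and] at hy
      obtain ⟨x, rfl⟩ := isConj_iff.1 hy
      rw [map_mul, map_mul f, Matrix.trace_mul_comm, ← map_mul, ← map_mul]
      simp

/-- Column orthogonality with the identity, `∑ χ(1) χ(g) = 0` for `g ≠ 1`: both sides are the trace
of left multiplication by `g` on the group algebra, computed in the basis `G` and in the basis of
matrix units of the Wedderburn decomposition. -/
theorem sum_trace_eq_zero {G : Type*} [Group G] [Finite G] {n : ℕ} {d : Fin n → ℕ}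
    (e : MonoidAlgebra ℂ G ≃ₐ[ℂ] Π i, Matrix (Fin (d i)) (Fin (d i)) ℂ) {g : G} (hg : g ≠ 1) :
    ∑ i, (d i : ℂ) * (e (of ℂ G g) i).trace = 0 := by
  classical
  have := Fintype.ofFinite G
  have h1 : LinearMap.trace ℂ _ (LinearMap.mulLeft ℂ (of ℂ G g)) = 0 := by
    rw [LinearMap.trace_eq_matrix_trace ℂ (MonoidAlgebra.basis G ℂ), Matrix.trace]
    refine Finset.sum_eq_zero fun x _ => ?_
    rw [Matrix.diag_apply, LinearMap.toMatrix_apply, basis_apply, LinearMap.mulLeft_apply, of_apply,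
      single_mul_single, mul_one, ← basis_apply, Module.Basis.repr_self,
      Finsupp.single_eq_of_ne' (by simpa using hg)]
  have h2 : LinearMap.trace ℂ _ (LinearMap.mulLeft ℂ (e (of ℂ G g))) =
      ∑ i, (d i : ℂ) * (e (of ℂ G g) i).trace := by
    rw [LinearMap.trace_eq_matrix_trace ℂ (Pi.basis fun i => Matrix.stdBasis ℂ (Fin (d i)) (Fin (d i))),
      Matrix.trace, Fintype.sum_sigma]
    refine Finset.sum_congr rfl fun i _ => ?_
    rw [Fintype.sum_prod_type, Matrix.trace, Finset.mul_sum]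
    refine Finset.sum_congr rfl fun a _ => ?_
    simp only [Matrix.diag_apply, LinearMap.toMatrix_apply, LinearMap.mulLeft_apply, Pi.basis_apply,
      Pi.basis_repr, Pi.mul_apply, Pi.single_eq_same, Matrix.stdBasis_eq_single]
    have : ∀ (M : Matrix (Fin (d i)) (Fin (d i)) ℂ) (y : Fin (d i)),
        (Matrix.stdBasis ℂ (Fin (d i)) (Fin (d i))).repr (M * Matrix.single a y 1) (a, y) = M a a := by
      intro M y
      simp [Matrix.stdBasis, Module.Basis.repr_reindex]
    simp [this]
  rw [← h2, ← h1, ← LinearMap.trace_conj' _ e.toLinearEquiv]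
  congr 1
  ext x
  simp [LinearEquiv.conj_apply]

theorem card_isConj_eq_index {G : Type*} [Group G] [Finite G] (g : G) :
    Nat.card {y : G // IsConj g y} = (Subgroup.centralizer {g}).index := by
  have h : (MulAction.stabilizer (ConjAct G) g).index = (Subgroup.centralizer {g}).index := by
    rw [ConjAct.stabilizer_eq_centralizer]
    rfl
  rw [← h, MulAction.index_stabilizer, ← Nat.card_coe_set_eq]
  refine Nat.card_congr (Equiv.subtypeEquivRight fun y => ?_)
  rw [ConjAct.mem_orbit_conjAct, isConj_comm]

/-- Burnside's lemma: in a finite simple group an element whose conjugacy class has prime power size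
is central. If not, every nontrivial irreducible character with `p ∤ χ(1)` vanishes at `g` (otherwise
`χ(g) / χ(1)` is a nonzero algebraic integer, so `g` acts as a scalar), and the column orthogonality
relation reads `1 + p B = 0` with `B` an algebraic integer. -/
theorem mem_center_of_card_class_eq_prime_pow {G : Type*} [Group G] [Finite G] [IsSimpleGroup G] {p a : ℕ}
    (hp : p.Prime) (g : G) (hcard : Nat.card {y : G // IsConj g y} = p ^ a) :
    g ∈ Subgroup.center G := by
  classical
  by_contra hg
  have hg1 : g ≠ 1 := fun h => hg (h ▸ one_mem _)
  have := Fintype.ofFinite G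
  have : NeZero (Nat.card G : ℂ) := ⟨by simp⟩
  obtain ⟨n, d, hd, ⟨e⟩⟩ :=
    IsSemisimpleRing.exists_algEquiv_pi_matrix_of_isAlgClosed ℂ (MonoidAlgebra ℂ G)
  let f : ∀ i, MonoidAlgebra ℂ G →ₐ[ℂ] Matrix (Fin (d i)) (Fin (d i)) ℂ := fun i =>
    (Pi.evalAlgHom ℂ (fun i => Matrix (Fin (d i)) (Fin (d i)) ℂ) i).comp (e : _ →ₐ[ℂ] _)
  have hfe : ∀ i x, f i x = e x i := fun i x => rfl
  have hf : ∀ i, Function.Surjective (f i) := fun i =>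
    (Function.surjective_eval i).comp e.surjective
  have hone : ∀ i, (1 : Matrix (Fin (d i)) (Fin (d i)) ℂ) ≠ 0 := fun i => by
    have := hd i
    exact one_ne_zero
  -- On a block where `G` acts trivially, the projection of `ℂ[G]` is the augmentation map; the
  -- scalar `c` does not depend on the block, so two different trivial blocks cannot be separated.
  have haug : ∀ x : MonoidAlgebra ℂ G, ∃ c : ℂ, ∀ i, (∀ y, f i (of ℂ G y) = 1) → f i x = c • 1 := by
    intro x
    induction x using MonoidAlgebra.induction_on with
    | of x => exact ⟨1, fun i hi => by rw [hi, one_smul]⟩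
    | add a b ha hb =>
      obtain ⟨c, hc⟩ := ha
      obtain ⟨c', hc'⟩ := hb
      exact ⟨c + c', fun i hi => by rw [map_add, hc i hi, hc' i hi, add_smul]⟩
    | smul r a ha =>
      obtain ⟨c, hc⟩ := ha
      exact ⟨r * c, fun i hi => by rw [map_smul, hc i hi, mul_smul]⟩
  have hdim : ∀ i, (∀ y, f i (of ℂ G y) = 1) → d i = 1 := by
    intro i hi
    have h0 := (hd i).1
    by_contra h1
    obtain ⟨x, hx⟩ := hf i (Matrix.single ⟨0, by omega⟩ ⟨1, by omega⟩ 1)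
    obtain ⟨c, hc⟩ := haug x
    have := congrFun (congrFun (hx.symm.trans (hc i hi)) ⟨0, by omega⟩) ⟨1, by omega⟩
    simp at this
  -- The sum of all group elements is a nonzero central element fixed by multiplication by `G`, so
  -- `G` acts trivially on any block where it does not vanish.
  obtain ⟨i₀, hi₀⟩ : ∃ i, ∀ y, f i (of ℂ G y) = 1 := by
    set s : MonoidAlgebra ℂ G := ∑ x : G, of ℂ G x with hs
    have hs0 : s ≠ 0 := by
      intro h
      have := congrArg (fun z => MonoidAlgebra.basis G ℂ |>.repr z 1) h
      simp only [hs, map_sum, of_apply, ← basis_apply, Module.Basis.repr_self] at this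
      simp [Finsupp.single_apply] at this
    have hxs : ∀ x, of ℂ G x * s = s := by
      intro x
      rw [hs, Finset.mul_sum]
      simp only [← map_mul]
      exact Fintype.sum_equiv (Equiv.mulLeft x) _ _ fun _ => rfl
    have hsx : ∀ x, s * of ℂ G x = s := by
      intro x
      rw [hs, Finset.sum_mul]
      simp only [← map_mul]
      exact Fintype.sum_equiv (Equiv.mulRight x) _ _ fun _ => rfl
    have hcomm' : ∀ a, a * s = s * a := by
      intro a
      induction a using MonoidAlgebra.induction_on with
      | of x => rw [hxs, hsx]
      | add a b ha hb => rw [add_mul, mul_add, ha, hb]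
      | smul r a ha => rw [smul_mul_assoc, mul_smul_comm, ha]
    obtain ⟨i, hi⟩ : ∃ i, f i s ≠ 0 := by
      by_contra! h
      exact hs0 (e.injective (by rw [map_zero]; funext i; exact h i))
    have hcen : f i s ∈ Set.center (Matrix (Fin (d i)) (Fin (d i)) ℂ) := by
      rw [Semigroup.mem_center_iff]
      intro M
      obtain ⟨a, rfl⟩ := hf i M
      rw [← map_mul, ← map_mul, hcomm' a]
    rw [Matrix.center_eq_range] at hcen
    obtain ⟨ω, hω⟩ := hcen
    have hω0 : ω ≠ 0 := by
      rintro rfl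
      exact hi (by rw [← hω, map_zero])
    refine ⟨i, fun y => ?_⟩
    have h1 : f i (of ℂ G y) * f i s = f i s := by rw [← map_mul, hxs]
    have h2 : f i s = ω • 1 := by rw [← hω, Matrix.smul_one_eq_diagonal]; rfl
    rw [h2, mul_smul_comm, mul_one] at h1
    exact smul_right_injective _ hω0 h1
  have huniq : ∀ i, (∀ y, f i (of ℂ G y) = 1) → i = i₀ := by
    intro i hi
    by_contra hne
    obtain ⟨x, hx⟩ := e.surjective (Pi.single i₀ 1)
    obtain ⟨c, hc⟩ := haug x
    have h1 := hc i₀ hi₀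
    have h2 := hc i hi
    rw [hfe, hx, Pi.single_eq_same] at h1
    rw [hfe, hx, Pi.single_eq_of_ne hne] at h2
    have hc0 : c = 0 := by
      by_contra hc0
      exact hone i ((smul_eq_zero.1 h2.symm).resolve_left hc0)
    rw [hc0, zero_smul] at h1
    exact hone i₀ h1
  have hpow : ∀ i, f i (of ℂ G g) ^ Nat.card G = 1 := fun i => by
    rw [← map_pow, ← map_pow, pow_card_eq_one', map_one, map_one]
  have hint : ∀ i, IsIntegral ℤ (f i (of ℂ G g)).trace := fun i =>
    isIntegral_trace_of_pow_eq_one Nat.card_pos _ (hpow i)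
  -- Any block other than the trivial one contributes a multiple of `p` to `∑ χ(1) χ(g)`.
  have hother : ∀ i, i ≠ i₀ → ∃ β : ℂ, IsIntegral ℤ β ∧
      (d i : ℂ) * (f i (of ℂ G g)).trace = p * β := by
    intro i hi
    by_cases hpd : p ∣ d i
    · obtain ⟨k, hk⟩ := hpd
      refine ⟨k * (f i (of ℂ G g)).trace, (map_natCast (algebraMap ℤ ℂ) k ▸ isIntegral_algebraMap).mul (hint i), ?_⟩
      have hk' : (d i : ℂ) = p * k := by exact_mod_cast hk
      linear_combination (f i (of ℂ G g)).trace * hk'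
    by_cases h0 : (f i (of ℂ G g)).trace = 0
    · exact ⟨0, isIntegral_zero, by rw [h0]; simp⟩
    exfalso
    -- A Bézout relation between `|g^G| = p ^ a` and `χ(1)` makes `χ(g) / χ(1)` integral.
    obtain ⟨ω, hω, hωe⟩ := exists_isIntegral_class_sum (f i) (hf i) g
    rw [hcard] at hωe
    have hcop : IsCoprime ((p ^ a : ℕ) : ℤ) (d i : ℤ) :=
      Nat.isCoprime_iff_coprime.2 (((Nat.Prime.coprime_iff_not_dvd hp).2 hpd).pow_left a)
    obtain ⟨u, v, huv⟩ := hcop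
    have hdi : (d i : ℂ) ≠ 0 := by exact_mod_cast (hd i).1
    have hquot : (f i (of ℂ G g)).trace / d i = u * ω + v * (f i (of ℂ G g)).trace := by
      have huv' : (u : ℂ) * (p ^ a : ℕ) + v * d i = 1 := by exact_mod_cast huv
      rw [div_eq_iff hdi]
      linear_combination (-(f i (of ℂ G g)).trace) * huv' + u * hωe
    have hquoti : IsIntegral ℤ ((f i (of ℂ G g)).trace / d i) := by
      rw [hquot]
      exact (isIntegral_algebraMap (R := ℤ) (x := u)).mul hω |>.add
        ((isIntegral_algebraMap (R := ℤ) (x := v)).mul (hint i))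
    obtain ⟨l, hl⟩ := exists_eq_scalar_of_isIntegral Nat.card_pos _ (hpow i) hquoti h0
    let ρ : G →* Matrix (Fin (d i)) (Fin (d i)) ℂ := (f i : _ →* _).comp (of ℂ G)
    rcases ρ.normal_ker.eq_bot_or_eq_top with hk | hk
    · apply hg
      rw [Subgroup.mem_center_iff]
      intro x
      have hinj : Function.Injective ρ := (MonoidHom.ker_eq_bot_iff ρ).1 hk
      apply hinj
      have hl' : ρ g = algebraMap ℂ _ l := hl
      rw [map_mul, map_mul, hl', Algebra.commutes]
    · exact hi (huniq i fun y => by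
        have : y ∈ ρ.ker := hk ▸ Subgroup.mem_top y
        exact this)
  choose! β hβ hβe using hother
  have hsum : ∑ i, (d i : ℂ) * (f i (of ℂ G g)).trace = 0 := sum_trace_eq_zero e hg1
  rw [← Finset.add_sum_erase _ _ (Finset.mem_univ i₀),
    Finset.sum_congr rfl (fun i hi => hβe i (Finset.ne_of_mem_erase hi)), ← Finset.mul_sum,
    hi₀, Matrix.trace_one, Fintype.card_fin, hdim i₀ hi₀] at hsum
  have hB : IsIntegral ℤ (∑ i ∈ Finset.univ.erase i₀, β i) :=
    IsIntegral.sum _ fun i hi => hβ i (Finset.ne_of_mem_erase hi)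
  generalize (∑ i ∈ Finset.univ.erase i₀, β i) = B at hB hsum
  have hp0 : (p : ℂ) ≠ 0 := by exact_mod_cast hp.ne_zero
  have hBe : B = algebraMap ℚ ℂ (-1 / p) := by
    simp only [map_div₀, map_neg, map_one, map_natCast]
    rw [eq_div_iff hp0]
    push_cast at hsum
    linear_combination hsum
  rw [hBe] at hB
  have hB' := (isIntegral_algebraMap_iff (algebraMap ℚ ℂ).injective).1 hB
  obtain ⟨z, hz⟩ := IsIntegrallyClosed.isIntegral_iff.1 hB'
  have hp0' : (p : ℚ) ≠ 0 := by exact_mod_cast hp.ne_zero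
  rw [eq_div_iff hp0'] at hz
  rw [eq_intCast] at hz
  have hz' : z * (p : ℤ) = -1 := by exact_mod_cast hz
  have : (p : ℤ) ∣ 1 := ⟨-z, by linarith⟩
  exact hp.one_lt.ne' (by exact_mod_cast Int.eq_one_of_dvd_one (by positivity) this)

/-- Burnside's `p^a q^b` theorem. A nontrivial central element of a Sylow `q`-subgroup has a conjugacy
class of `p`-power size, which in a simple group makes it central. -/
theorem isSolvable_of_two_primes.{u} (p q : ℕ) (hp : p.Prime) (hq : q.Prime) (N : ℕ) :
    ∀ (G : Type u) [Group G] [Finite G],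
    Nat.card G = N → (∀ r : ℕ, r.Prime → r ∣ Nat.card G → r = p ∨ r = q) → Group.IsSolvable G := by
  induction N using Nat.strong_induction_on with
  | _ N ih =>
  intro G _ _ hN hG
  have := Fact.mk hp
  have := Fact.mk hq
  rcases subsingleton_or_nontrivial G with hs | hs
  · infer_instance
  by_cases hsimp : IsSimpleGroup G
  · let Q : Sylow q G := default
    rcases subsingleton_or_nontrivial (Q : Subgroup G) with hQ | hQ
    · have hQ1 : ¬ q ∣ Nat.card G := by
        intro h
        have := Q.dvd_card_of_dvd_card h
        have h1 : Nat.card (Q : Subgroup G) = 1 := Nat.card_of_subsingleton 1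
        rw [h1] at this
        exact hq.one_lt.ne' (Nat.dvd_one.1 this)
      have hpg : IsPGroup p G := IsPGroup.of_card (n := (Nat.card G).primeFactorsList.length)
        (Nat.eq_prime_pow_of_unique_prime_dvd Nat.card_pos.ne' fun {r} hr hd =>
          (hG r hr hd).resolve_right fun h => hQ1 (h ▸ hd))
      have := hpg.isNilpotent
      infer_instance
    · have := Q.isPGroup'.center_nontrivial
      obtain ⟨⟨g, hgc⟩, hg1⟩ := exists_ne (1 : Subgroup.center (Q : Subgroup G))
      have hQle : (Q : Subgroup G) ≤ Subgroup.centralizer {(g : G)} := by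
        intro x hx
        rw [Subgroup.mem_centralizer_singleton_iff]
        exact congrArg Subtype.val (Subgroup.mem_center_iff.1 hgc ⟨x, hx⟩)
      have hidx := Subgroup.index_dvd_of_le hQle
      have hnd : ¬ q ∣ (Subgroup.centralizer {(g : G)}).index := fun h =>
        Q.not_dvd_index (h.trans hidx)
      have hcl : Nat.card {y : G // IsConj (g : G) y} =
          p ^ (Subgroup.centralizer {(g : G)}).index.primeFactorsList.length := by
        rw [card_isConj_eq_index]
        exact Nat.eq_prime_pow_of_unique_prime_dvd Subgroup.index_ne_zero_of_finite fun {r} hr hd =>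
          (hG r hr (hd.trans (Subgroup.index_dvd_card _))).resolve_right fun h => hnd (h ▸ hd)
      have hgZ := mem_center_of_card_class_eq_prime_pow hp (g : G) hcl
      rcases (inferInstance : (Subgroup.center G).Normal).eq_bot_or_eq_top with h | h
      · rw [h, Subgroup.mem_bot] at hgZ
        exact absurd (Subtype.ext (Subtype.ext hgZ)) hg1
      · exact Group.isSolvable_of_comm fun a b =>
          (Subgroup.mem_center_iff.1 (h ▸ Subgroup.mem_top b : b ∈ Subgroup.center G) a)
  · obtain ⟨K, hK, hKb, hKt⟩ : ∃ K : Subgroup G, K.Normal ∧ K ≠ ⊥ ∧ K ≠ ⊤ := by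
      by_contra! h
      exact hsimp ⟨fun K hK => or_iff_not_imp_left.2 (h K hK)⟩
    have hmul := K.card_mul_index
    have h1 : 1 < Nat.card K := (Subgroup.one_lt_card_iff_ne_bot K).2 hKb
    have h2 : 1 < K.index := Subgroup.one_lt_index_of_ne_top hKt
    rw [Group.isSolvable_iff_subgroup_quotient K]
    refine ⟨ih (Nat.card K) ?_ K rfl fun r hr hd => hG r hr (hd.trans K.card_subgroup_dvd_card),
      ih (Nat.card (G ⧸ K)) ?_ (G ⧸ K) rfl fun r hr hd => hG r hr (hd.trans K.card_quotient_dvd_card)⟩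
    · rw [← hN, ← hmul]; nlinarith
    · rw [← hN, ← hmul, ← Subgroup.index_eq_card]; nlinarith

end Burnside

/-! ### Permuting subgroups and Kegel's lemma -/

/-- `C A ⊆ A C`. For subgroups this is the same as `A C = C A` (take inverses); the one-sided form
is the one that passes directly to joins, images and intersections. -/
def Permutes {G : Type*} [Group G] (A C : Subgroup G) : Prop :=
  ∀ c ∈ C, ∀ a ∈ A, ∃ a' ∈ A, ∃ c' ∈ C, c * a = a' * c'

namespace Permutes
variable {G : Type*} [Group G] {A A' C : Subgroup G}

theorem of_mul_eq (h : (A : Set G) * (C : Set G) = (C : Set G) * (A : Set G)) : Permutes A C := by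
  intro c hc a ha
  have : c * a ∈ (A : Set G) * (C : Set G) := h ▸ Set.mul_mem_mul hc ha
  obtain ⟨a', ha', c', hc', h⟩ := Set.mem_mul.1 this
  exact ⟨a', ha', c', hc', h.symm⟩

theorem sup_left (h : Permutes A C) (h' : Permutes A' C) : Permutes (A ⊔ A') C := by
  intro c hc a ha
  rw [Subgroup.sup_eq_closure] at ha
  have key : ∀ x ∈ (A : Set G) ∪ A', ∀ c ∈ C, ∃ a' ∈ A ⊔ A', ∃ c' ∈ C, c * x = a' * c' := by
    rintro x (hx | hx) c hc
    · obtain ⟨a', ha', r⟩ := h c hc x hx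
      exact ⟨a', Subgroup.mem_sup_left ha', r⟩
    · obtain ⟨a', ha', r⟩ := h' c hc x hx
      exact ⟨a', Subgroup.mem_sup_right ha', r⟩
  induction ha using Subgroup.closure_induction'' generalizing c with
  | mem x hx => exact key x hx c hc
  | inv_mem x hx =>
    exact key x⁻¹ (hx.imp (fun h => A.inv_mem h) (fun h => A'.inv_mem h)) c hc
  | one => exact ⟨1, one_mem _, c, hc, by simp⟩
  | mul x y hx hy ihx ihy =>
    obtain ⟨a₁, ha₁, c₁, hc₁, e₁⟩ := ihx c hc
    obtain ⟨a₂, ha₂, c₂, hc₂, e₂⟩ := ihy c₁ hc₁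
    exact ⟨a₁ * a₂, mul_mem ha₁ ha₂, c₂, hc₂, by rw [← mul_assoc, e₁, mul_assoc, e₂, mul_assoc]⟩

theorem exists_of_mem_sup (h : Permutes A C) {x : G} (hx : x ∈ A ⊔ C) :
    ∃ a ∈ A, ∃ c ∈ C, x = a * c := by
  rw [Subgroup.sup_eq_closure] at hx
  have key : ∀ z ∈ (A : Set G) ∪ C, ∀ y, (∃ a ∈ A, ∃ c ∈ C, y = a * c) →
      ∃ a ∈ A, ∃ c ∈ C, z * y = a * c := by
    rintro z (hz | hz) y ⟨a, ha, c, hc, rfl⟩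
    · exact ⟨z * a, mul_mem hz ha, c, hc, by rw [mul_assoc]⟩
    · obtain ⟨a', ha', c', hc', e⟩ := h z hz a ha
      exact ⟨a', ha', c' * c, mul_mem hc' hc, by rw [← mul_assoc, e, mul_assoc]⟩
  induction hx using Subgroup.closure_induction_left with
  | one => exact ⟨1, one_mem _, 1, one_mem _, by simp⟩
  | mul_left z hz y hy ih => exact key z hz y ih
  | inv_mul_cancel z hz y hy ih =>
    exact key z⁻¹ (hz.imp (fun h => A.inv_mem h) (fun h => C.inv_mem h)) y ih

theorem conj_smul (b : G) (h : Permutes A (MulAut.conj b⁻¹ • C)) : Permutes (MulAut.conj b • A) C := by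
  intro c hc a ha
  rw [Subgroup.mem_pointwise_smul_iff_inv_smul_mem, ← map_inv, MulAut.smul_def, MulAut.conj_apply] at ha
  obtain ⟨a', ha', c', hc', e⟩ := h (b⁻¹ * c * b) (by
    rw [Subgroup.mem_pointwise_smul_iff_inv_smul_mem, ← map_inv, MulAut.smul_def, MulAut.conj_apply]
    simpa [mul_assoc] using hc) _ ha
  refine ⟨b * a' * b⁻¹, ?_, b * c' * b⁻¹, ?_, ?_⟩
  · rw [Subgroup.mem_pointwise_smul_iff_inv_smul_mem, ← map_inv, MulAut.smul_def, MulAut.conj_apply]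
    simpa [mul_assoc] using ha'
  · rw [Subgroup.mem_pointwise_smul_iff_inv_smul_mem, ← map_inv, MulAut.smul_def, MulAut.conj_apply] at hc'
    simpa [mul_assoc] using hc'
  · have : b * (b⁻¹ * c * b * (b⁻¹ * a * b⁻¹⁻¹)) * b⁻¹ = b * (a' * c') * b⁻¹ := by rw [e]
    simpa [mul_assoc] using this

end Permutes

/-- If `A B^g = G` then already `g` lies in `A B`, so passing from `B` to a conjugate that permutes
with `A` does not make the join the whole group. -/
theorem sup_conj_ne_top {G : Type*} [Group G] {A B : Subgroup G} {g : G}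
    (hperm : Permutes A (MulAut.conj g • B)) (hAB : A ⊔ B ≠ ⊤) : A ⊔ MulAut.conj g • B ≠ ⊤ := by
  intro htop
  obtain ⟨a, ha, c, hc, e⟩ := hperm.exists_of_mem_sup (x := g⁻¹) (htop ▸ Subgroup.mem_top _)
  rw [Subgroup.mem_pointwise_smul_iff_inv_smul_mem, ← map_inv, MulAut.smul_def, MulAut.conj_apply,
    inv_inv] at hc
  have hg : g ∈ A ⊔ B := by
    have h1 : a * g * (g⁻¹ * c * g) = 1 := by
      have : a * c * g = 1 := by rw [← e]; simp
      rw [← this]; group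
    have h2 : g = a⁻¹ * (g⁻¹ * c * g)⁻¹ := by
      rw [eq_mul_inv_iff_mul_eq]
      exact (inv_eq_of_mul_eq_one_right (by rw [← mul_assoc]; exact h1)).symm
    rw [h2]
    exact mul_mem (Subgroup.mem_sup_left (inv_mem ha)) (Subgroup.mem_sup_right (inv_mem hc))
  apply hAB
  rw [eq_top_iff, ← htop]
  refine sup_le le_sup_left fun x hx => ?_
  rw [Subgroup.mem_pointwise_smul_iff_inv_smul_mem, ← map_inv, MulAut.smul_def, MulAut.conj_apply,
    inv_inv] at hx
  have : x = g * (g⁻¹ * x * g) * g⁻¹ := by group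
  rw [this]
  exact mul_mem (mul_mem hg (Subgroup.mem_sup_right hx)) (inv_mem hg)

/-- Kegel's lemma: if `A` permutes with all conjugates of `B` and `A B ≠ G`, then `A` or `B` lies in a
proper normal subgroup. If all conjugates of `B` normalise `A` this is clear; otherwise some `b` in a
conjugate `B^g` does not, and `A` may be replaced by the strictly larger subgroup `⟨A, A^b⟩`, which
still permutes with all conjugates of `B` and lies in `A B^g`. -/
theorem normalClosure_ne_top_of_permutes {G : Type*} [Group G] [Finite G] (A : Subgroup G) :
    ∀ B : Subgroup G, (∀ g : G, Permutes A (MulAut.conj g • B)) → A ⊔ B ≠ ⊤ →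
      Subgroup.normalClosure (A : Set G) ≠ ⊤ ∨ Subgroup.normalClosure (B : Set G) ≠ ⊤ := by
  induction A using WellFoundedGT.induction with
  | _ A ih =>
  intro B hperm hAB
  by_cases hnorm : ∀ g : G, MulAut.conj g • B ≤ Subgroup.normalizer (A : Set G)
  · by_contra! hcon
    have hle : Subgroup.normalClosure (B : Set G) ≤ Subgroup.normalizer (A : Set G) := by
      rw [Subgroup.normalClosure, Subgroup.closure_le]
      intro x hx
      obtain ⟨b, hb, hbx⟩ := Group.mem_conjugatesOfSet_iff.1 hx
      obtain ⟨g, rfl⟩ := isConj_iff.1 hbx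
      exact hnorm g (Subgroup.smul_mem_pointwise_smul b (MulAut.conj g) B hb)
    rw [hcon.2, top_le_iff, Subgroup.normalizer_eq_top_iff] at hle
    have h1 := Subgroup.normalClosure_eq_self A
    rw [hcon.1] at h1
    exact hAB (by rw [← h1, top_sup_eq])
  · push Not at hnorm
    obtain ⟨g, hg⟩ := hnorm
    obtain ⟨b, hb, hbA⟩ := SetLike.not_le_iff_exists.1 hg
    have hlt : A < A ⊔ MulAut.conj b • A := by
      refine lt_of_le_of_ne le_sup_left fun heq => hbA ?_
      have hle : MulAut.conj b • A ≤ A := by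
        conv_rhs => rw [heq]
        exact le_sup_right
      have heq' : MulAut.conj b • A = A :=
        Subgroup.eq_of_le_of_card_ge hle
          (Nat.card_congr (Subgroup.equivSMul (MulAut.conj b) A).toEquiv).le
      rw [Subgroup.mem_normalizer_iff]
      intro c
      conv_rhs => rw [← heq']
      exact (Subgroup.smul_mem_pointwise_smul_iff (a := MulAut.conj b)).symm
    have hconj : ∀ x, MulAut.conj x • MulAut.conj g • B = MulAut.conj (x * g) • B := fun x => by
      rw [map_mul, mul_smul]
    have hsup : A ⊔ MulAut.conj b • A ≤ A ⊔ MulAut.conj g • B := by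
      refine sup_le le_sup_left fun x hx => ?_
      rw [Subgroup.mem_pointwise_smul_iff_inv_smul_mem, ← map_inv, MulAut.smul_def,
        MulAut.conj_apply, inv_inv] at hx
      have : x = b * (b⁻¹ * x * b) * b⁻¹ := by group
      rw [this]
      have hb' := Subgroup.mem_sup_right (S := A) hb
      exact mul_mem (mul_mem hb' (Subgroup.mem_sup_left hx)) (inv_mem hb')
    refine (ih _ hlt (MulAut.conj g • B) ?_ ?_).imp ?_ ?_
    · intro x
      rw [hconj]
      refine (hperm _).sup_left (Permutes.conj_smul b ?_)
      rw [← mul_smul, ← map_mul]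
      exact hperm _
    · intro htop
      refine sup_conj_ne_top (hperm g) hAB (top_le_iff.1 ?_)
      rw [← htop]
      exact sup_le hsup le_sup_right
    · intro h h'
      exact h (top_le_iff.1 (h' ▸ Subgroup.normalClosure_mono (fun x hx => Subgroup.mem_sup_left hx)))
    · intro h h'
      refine h (top_le_iff.1 (h' ▸ Subgroup.normalClosure_le_normal fun x hx => ?_))
      have h1 : g * x * g⁻¹ ∈ Subgroup.normalClosure ((MulAut.conj g • B : Subgroup G) : Set G) :=
        Subgroup.subset_normalClosure (Subgroup.smul_mem_pointwise_smul x (MulAut.conj g) B hx)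
      have h2 := Subgroup.normalClosure_normal.conj_mem _ h1 g⁻¹
      simpa [mul_assoc] using h2

/-! ### The soluble radical -/

theorem isSolvable_sup {K : Type*} [Group K] (N R : Subgroup K) [R.Normal]
    [Group.IsSolvable N] [Group.IsSolvable R] : Group.IsSolvable ↥(N ⊔ R) := by
  rw [Group.isSolvable_iff_subgroup_quotient (R.subgroupOf (N ⊔ R))]
  exact ⟨Group.isSolvable_of_isSolvable_injective
      (f := (Subgroup.subgroupOfEquivOfLe (le_sup_right : R ≤ N ⊔ R)).toMonoidHom)
      (MulEquiv.injective _),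
    Group.isSolvable_of_surjective
      (f := (QuotientGroup.quotientInfEquivProdNormalQuotient N R).toMonoidHom)
      (MulEquiv.surjective _)⟩

/-- The soluble radical of a finite group. -/
theorem exists_solubleRadical (K : Type*) [Group K] [Finite K] :
    ∃ R : Subgroup K, R.Characteristic ∧ Group.IsSolvable R ∧
      ∀ N : Subgroup K, N.Normal → Group.IsSolvable N → N ≤ R := by
  obtain ⟨R, ⟨hRn, hRs⟩, hmax⟩ := Set.Finite.exists_maximal
    (Set.toFinite {N : Subgroup K | N.Normal ∧ Group.IsSolvable N})
    ⟨⊥, inferInstance, inferInstance⟩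
  have hbig : ∀ N : Subgroup K, N.Normal → Group.IsSolvable N → N ≤ R := by
    intro N hN hNs
    exact le_sup_left.trans (hmax ⟨Subgroup.sup_normal N R, isSolvable_sup N R⟩ le_sup_right)
  refine ⟨R, Subgroup.characteristic_iff_map_le.2 fun φ => hbig _ ?_ ?_, hRs, hbig⟩
  · exact hRn.map _ φ.surjective
  · exact Group.isSolvable_of_surjective (f := φ.toMonoidHom.subgroupMap R)
      (MonoidHom.subgroupMap_surjective _ _)

/-- If the normal closure of `H ∩ K` in the normal subgroup `K` is soluble, then `H ∩ K` lies in a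
soluble normal subgroup of the whole group, namely the soluble radical of `K`. -/
theorem exists_normal_of_normal {G : Type*} [Group G] [Finite G] (K H : Subgroup G) [K.Normal]
    (hs : Group.IsSolvable (Subgroup.normalClosure (H.subgroupOf K : Set K))) :
    ∃ R : Subgroup G, R.Normal ∧ Group.IsSolvable R ∧ H ⊓ K ≤ R := by
  obtain ⟨R, hR, hRs, hmax⟩ := exists_solubleRadical K
  refine ⟨R.map K.subtype, ConjAct.normal_of_characteristic_of_normal,
    Group.isSolvable_of_surjective (f := K.subtype.subgroupMap R)
      (MonoidHom.subgroupMap_surjective _ _), ?_⟩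
  rintro x ⟨hxH, hxK⟩
  exact ⟨⟨x, hxK⟩, hmax _ Subgroup.normalClosure_normal hs
    (Subgroup.subset_normalClosure (Subgroup.mem_subgroupOf.2 hxH)), rfl⟩

/-! ### Semipermutable subgroups -/

/-- `H` permutes with every Sylow `q`-subgroup of the group, for every prime `q ≠ p`. -/
def Semipermutable {G : Type*} [Group G] (p : ℕ) (H : Subgroup G) : Prop :=
  ∀ q : ℕ, q.Prime → q ≠ p → ∀ Q : Sylow q G, Permutes H (Q : Subgroup G)

/-- Semipermutability passes to `H ∩ K` as a subgroup of `K`, as soon as `K` contains `H` or the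
Sylow subgroups concerned: a Sylow subgroup of `K` is the intersection of `K` with one of `G`, and in a
factorisation of an element of `K` both factors then lie in `K`. -/
theorem Semipermutable.subgroupOf {G : Type*} [Group G] {p : ℕ} {H : Subgroup G}
    (h : Semipermutable p H) (K : Subgroup G)
    (hK : ∀ q : ℕ, q.Prime → q ≠ p → ∀ Q : Sylow q G, H ≤ K ∨ (Q : Subgroup G) ≤ K) :
    Semipermutable p (H.subgroupOf K) := by
  intro q hq hqp Q₀ c hc a ha
  obtain ⟨Q, hQ⟩ := (Q₀.isPGroup'.map K.subtype).exists_le_sylow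
  have hQ₀ : (Q : Subgroup G).subgroupOf K = Q₀ := Q₀.is_maximal'
    (Q.isPGroup'.comap_of_injective K.subtype K.subtype_injective) (Subgroup.map_le_iff_le_comap.1 hQ)
  obtain ⟨a', ha', c', hc', e⟩ := h q hq hqp Q c (hQ (Subgroup.mem_map_of_mem _ hc)) a ha
  have hcaK : a' * c' ∈ K := e ▸ mul_mem c.2 a.2
  have hmem : a' ∈ K ∧ c' ∈ K := by
    rcases hK q hq hqp Q with hle | hle
    · exact ⟨hle ha', (Subgroup.mul_mem_cancel_left _ (hle ha')).1 hcaK⟩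
    · exact ⟨(Subgroup.mul_mem_cancel_right _ (hle hc')).1 hcaK, hle hc'⟩
  refine ⟨⟨a', hmem.1⟩, ha', ⟨c', hmem.2⟩, ?_, Subtype.ext e⟩
  rw [← hQ₀]
  exact hc'

theorem Semipermutable.map {G G' : Type*} [Group G] [Finite G] [Group G'] {p : ℕ} {H : Subgroup G}
    (h : Semipermutable p H) {f : G →* G'} (hf : Function.Surjective f) :
    Semipermutable p (H.map f) := by
  intro q hq hqp Q' c hc a ha
  have := Fact.mk hq
  obtain ⟨Q, rfl⟩ := Sylow.mapSurjective_surjective hf q Q'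
  rw [Sylow.coe_mapSurjective] at hc ⊢
  obtain ⟨c, hc, rfl⟩ := hc
  obtain ⟨a, ha, rfl⟩ := ha
  obtain ⟨a', ha', c', hc', e⟩ := h q hq hqp Q c hc a ha
  exact ⟨f a', Subgroup.mem_map_of_mem f ha', f c', Subgroup.mem_map_of_mem f hc', by
    rw [← map_mul, e, map_mul]⟩

/-- If `G = H Q` is a product of a `p`-subgroup and a `q`-subgroup, then only `p` and `q` divide the
order of `G`, and Burnside's theorem applies. -/
theorem isSolvable_of_sup_eq_top {G : Type*} [Group G] [Finite G] {p q : ℕ} (hp : p.Prime)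
    (hq : q.Prime) {H Q : Subgroup G} (hH : IsPGroup p H) (hQ : IsPGroup q Q)
    (hperm : Permutes H Q) (htop : H ⊔ Q = ⊤) : Group.IsSolvable G := by
  have := Fact.mk hp
  have := Fact.mk hq
  -- `G = H Q` says that `H` is transitive on `G ⧸ Q`, so the index of `Q` divides the order of `H`.
  have htrans : MulAction.IsPretransitive H (G ⧸ Q) := by
    refine (MulAction.isPretransitive_iff_base ((1 : G) : G ⧸ Q)).2 fun x => ?_
    obtain ⟨x, rfl⟩ := QuotientGroup.mk_surjective x
    obtain ⟨a, ha, c, hc, rfl⟩ := hperm.exists_of_mem_sup (x := x) (htop ▸ Subgroup.mem_top _)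
    refine ⟨⟨a, ha⟩, ?_⟩
    change ((a * 1 : G) : G ⧸ Q) = _
    rw [QuotientGroup.eq]
    simpa using hc
  have hidx : Q.index ∣ Nat.card H := by
    rw [Subgroup.index_eq_card, ← MulAction.index_stabilizer_of_transitive H ((1 : G) : G ⧸ Q)]
    exact Subgroup.index_dvd_card _
  refine isSolvable_of_two_primes p q hp hq _ G rfl fun r hr hd => ?_
  rw [← Q.card_mul_index, hr.dvd_mul] at hd
  obtain ⟨m, hm⟩ := IsPGroup.iff_card.1 hH
  obtain ⟨n, hn⟩ := IsPGroup.iff_card.1 hQ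
  rcases hd with hd | hd
  · rw [hn] at hd
    exact Or.inr ((Nat.prime_dvd_prime_iff_eq hr hq).1 (hr.dvd_of_dvd_pow hd))
  · have := hd.trans hidx
    rw [hm] at this
    exact Or.inl ((Nat.prime_dvd_prime_iff_eq hr hp).1 (hr.dvd_of_dvd_pow this))

/-- The theorem, by strong induction on the order `N` of the group. -/
theorem isSolvable_normalClosure_of_semipermutable.{u} (p : ℕ) (hp : p.Prime) (N : ℕ) :
    ∀ (G : Type u) [Group G] [Finite G] (H : Subgroup G),
    Nat.card G = N → IsPGroup p H → Semipermutable p H →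
    Group.IsSolvable (Subgroup.normalClosure (H : Set G)) := by
  induction N using Nat.strong_induction_on with
  | _ N ih =>
  intro G _ _ H hN hH hperm
  have := Fact.mk hp
  have ihK : ∀ K : Subgroup G, K ≠ ⊤ → Semipermutable p (H.subgroupOf K) →
      Group.IsSolvable (Subgroup.normalClosure (H.subgroupOf K : Set K)) := fun K hK hsp =>
    ih _ (hN ▸ lt_of_le_of_ne K.card_le_card_group fun h => hK (K.eq_top_of_card_eq h)) K _ rfl
      (hH.comap_of_injective K.subtype K.subtype_injective) hsp
  by_cases htop : Subgroup.normalClosure (H : Set G) = ⊤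
  swap
  · have hle : H ≤ Subgroup.normalClosure (H : Set G) := Subgroup.subset_normalClosure
    obtain ⟨R, hR, hRs, hHR⟩ := exists_normal_of_normal (Subgroup.normalClosure (H : Set G)) H
      (ihK _ htop (hperm.subgroupOf _ fun _ _ _ _ => Or.inl hle))
    rw [inf_eq_left.2 hle] at hHR
    exact Group.isSolvable_of_isSolvable_injective
      (Subgroup.inclusion_injective (Subgroup.normalClosure_le_normal hHR))
  suffices Group.IsSolvable G by infer_instance
  by_contra hns
  -- `G` is now the normal closure of `H` and is assumed insoluble. Proper quotients of `G` are soluble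
  -- by induction, so `G` has no nontrivial soluble normal subgroup.
  have hquot : ∀ K : Subgroup G, [K.Normal] → K ≠ ⊥ → Group.IsSolvable (G ⧸ K) := by
    intro K _ hK
    have h1 := ih (Nat.card (G ⧸ K)) ?_ (G ⧸ K) (H.map (QuotientGroup.mk' K)) rfl (hH.map _)
      (hperm.map (QuotientGroup.mk'_surjective K))
    · rw [Subgroup.coe_map, ← Subgroup.map_normalClosure _ _ (QuotientGroup.mk'_surjective K), htop,
        Subgroup.map_top_of_surjective _ (QuotientGroup.mk'_surjective K)] at h1
      exact Group.isSolvable_of_surjective (f := (⊤ : Subgroup (G ⧸ K)).subtype)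
        fun x => ⟨⟨x, trivial⟩, rfl⟩
    · have hmul := K.card_mul_index
      have h1 : 1 < Nat.card K := (Subgroup.one_lt_card_iff_ne_bot K).2 hK
      have h2 : 0 < K.index := Nat.pos_of_ne_zero Subgroup.index_ne_zero_of_finite
      rw [← hN, ← hmul, ← Subgroup.index_eq_card]
      nlinarith
  have hbot : ∀ K : Subgroup G, K.Normal → Group.IsSolvable K → K = ⊥ := by
    intro K hK hKs
    by_contra hne
    exact hns ((Group.isSolvable_iff_subgroup_quotient K).2 ⟨hKs, hquot K hne⟩)
  obtain ⟨q, hq, hqp, hqd⟩ : ∃ q : ℕ, q.Prime ∧ q ≠ p ∧ q ∣ Nat.card G := by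
    by_contra! hcon
    have hpg : IsPGroup p G := IsPGroup.of_card (n := (Nat.card G).primeFactorsList.length)
      (Nat.eq_prime_pow_of_unique_prime_dvd Nat.card_pos.ne' fun {r} hr hd => by
        by_contra hrp
        exact hcon r hr hrp hd)
    have := hpg.isNilpotent
    exact hns inferInstance
  have := Fact.mk hq
  let Q : Sylow q G := default
  have hQbot : (Q : Subgroup G) ≠ ⊥ := by
    intro h
    have h1 := Q.dvd_card_of_dvd_card hqd
    rw [h, Subgroup.card_bot] at h1
    exact hq.one_lt.ne' (Nat.dvd_one.1 h1)
  have hQtop : H ⊔ (Q : Subgroup G) ≠ ⊤ := fun h =>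
    hns (isSolvable_of_sup_eq_top hp hq hH Q.isPGroup' (hperm q hq hqp Q) h)
  have hQcl : Subgroup.normalClosure ((Q : Subgroup G) : Set G) ≠ ⊤ :=
    (normalClosure_ne_top_of_permutes H Q (fun g => by
      rw [← Sylow.coe_subgroup_smul]; exact hperm q hq hqp _) hQtop).resolve_left (· htop)
  -- By Kegel's lemma a nontrivial Sylow `q`-subgroup generates a proper normal subgroup, so `G` has a
  -- nontrivial soluble quotient and is not perfect.
  have hcomm : commutator G ≠ ⊤ := by
    intro h
    set L := Subgroup.normalClosure ((Q : Subgroup G) : Set G) with hL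
    have hLbot : L ≠ ⊥ := fun h => hQbot (le_bot_iff.1 (h ▸ Subgroup.subset_normalClosure))
    have := hquot L hLbot
    have : Nontrivial (G ⧸ L) := QuotientGroup.nontrivial_iff.2 hQcl
    have hlt := Group.IsSolvable.commutator_lt_top_of_nontrivial (G ⧸ L)
    have hsurj := Subgroup.map_top_of_surjective _ (QuotientGroup.mk'_surjective L)
    have hm := congrArg (Subgroup.map (QuotientGroup.mk' L)) h
    rw [commutator_def, Subgroup.map_commutator, hsurj, ← commutator_def] at hm
    exact hlt.ne hm
  set M := commutator G with hM
  have hHM : H ⊔ M = ⊤ := by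
    have : (H ⊔ M).Normal := Subgroup.Normal.of_commutator_le G le_sup_right
    rw [← top_le_iff, ← htop]
    exact Subgroup.normalClosure_le_normal fun x hx => Subgroup.mem_sup_left hx
  -- `G ⧸ M` is an image of `H`, hence a `p`-group, so `M` contains every Sylow subgroup for `r ≠ p`.
  have hSylM : ∀ r : ℕ, r.Prime → r ≠ p → ∀ P : Sylow r G, (P : Subgroup G) ≤ M := by
    intro r hr hrp P
    have := Fact.mk hr
    have hHtop : H.map (QuotientGroup.mk' M) = ⊤ := by
      have := congrArg (Subgroup.map (QuotientGroup.mk' M)) hHM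
      rwa [Subgroup.map_sup, QuotientGroup.map_mk'_self, sup_bot_eq,
        Subgroup.map_top_of_surjective _ (QuotientGroup.mk'_surjective M)] at this
    have hdis := IsPGroup.disjoint_of_ne r p hrp _ _ (P.isPGroup'.map (QuotientGroup.mk' M))
      (hH.map (QuotientGroup.mk' M))
    rw [hHtop, disjoint_top, Subgroup.map_eq_bot_iff, QuotientGroup.ker_mk'] at hdis
    exact hdis
  have hinf : H ⊓ M = ⊥ := by
    obtain ⟨R, hR, hRs, hHR⟩ := exists_normal_of_normal M H
      (ihK _ hcomm (hperm.subgroupOf _ fun r hr hrp P => Or.inr (hSylM r hr hrp P)))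
    rw [hbot R hR hRs] at hHR
    exact le_bot_iff.1 hHR
  -- For `c ∈ P` write `c h⁻¹ = a c'` with `a ∈ H` and `c' ∈ P`; then `h a ∈ H ⊓ M = ⊥`, so
  -- `h c h⁻¹ = c'`. Thus `H` normalises every Sylow `q`-subgroup.
  have hconj : ∀ P : Sylow q G, ∀ h ∈ H, ∀ c ∈ (P : Subgroup G), h * c * h⁻¹ ∈ (P : Subgroup G) := by
    intro P h hh c hc
    obtain ⟨a, ha, c', hc', e⟩ := hperm q hq hqp P c hc h⁻¹ (inv_mem hh)
    have hM1 : h * c * h⁻¹ ∈ M := Subgroup.Normal.conj_mem inferInstance c (hSylM q hq hqp P hc) h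
    have e' : h * c * h⁻¹ = h * a * c' := by rw [mul_assoc, e, mul_assoc]
    rw [e', Subgroup.mul_mem_cancel_right _ (hSylM q hq hqp P hc')] at hM1
    have h1 : h * a ∈ H ⊓ M := ⟨mul_mem hh ha, hM1⟩
    rw [hinf, Subgroup.mem_bot] at h1
    rw [e', h1, one_mul]
    exact hc'
  have hnorm : ∀ P : Sylow q G, H ≤ Subgroup.normalizer ((P : Subgroup G) : Set G) := by
    intro P h hh
    rw [Subgroup.mem_normalizer_iff]
    refine fun c => ⟨hconj P h hh c, fun hc => ?_⟩
    simpa [mul_assoc] using hconj P h⁻¹ (inv_mem hh) _ hc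
  -- All conjugates of `H` normalise `Q`, and they generate `G`: `Q` is a soluble normal subgroup.
  have hle : Subgroup.normalClosure (H : Set G) ≤
      Subgroup.normalizer ((Q : Subgroup G) : Set G) := by
    rw [Subgroup.normalClosure, Subgroup.closure_le]
    intro x hx
    obtain ⟨h, hh, hhx⟩ := Group.mem_conjugatesOfSet_iff.1 hx
    obtain ⟨g, rfl⟩ := isConj_iff.1 hhx
    have h1 := Sylow.smul_eq_iff_mem_normalizer.2 (hnorm (g⁻¹ • Q) hh)
    exact Sylow.smul_eq_iff_mem_normalizer.1 (by rw [mul_smul, mul_smul, h1, smul_inv_smul])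
  rw [htop, top_le_iff, Subgroup.normalizer_eq_top_iff] at hle
  have := Q.isPGroup'.isNilpotent
  exact hQbot (hbot Q hle inferInstance)

end IsaacsSemipermutable

/-- Isaacs: If a `p`-subgroup `H` of a finite group `G` permutes
with every Sylow `q`-subgroup of `G` for every prime `q ≠ p`, then the normal
closure `H^G` is soluble. -/
theorem isSolvable_normalClosure_of_pSubgroup_permutes_with_sylows
    (G : Type*) [Group G] [Finite G] (p : ℕ) (hp : p.Prime)
    (H : Subgroup G) (hH : IsPGroup p ↥H)
    (hperm : ∀ q : ℕ, q.Prime → q ≠ p → ∀ Q : Sylow q G,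
      (H : Set G) * ((Q : Subgroup G) : Set G) = ((Q : Subgroup G) : Set G) * (H : Set G)) :
    IsSolvable ↥(Subgroup.normalClosure (H : Set G)) := by
  exact IsaacsSemipermutable.isSolvable_normalClosure_of_semipermutable p hp _ G H rfl hH fun q hq hqp Q =>
    IsaacsSemipermutable.Permutes.of_mul_eq (hperm q hq hqp Q)
end
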